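/- (L^ε estimate) There exist constants ε > 0 and C > 0 depending only on n, λ, Λ such that: if a_{ij} : Q₃ → ℝ are uniformly elliptic measurable coefficients and v ∈ C²(Q₃) is nonnegative and satisfies Σ_{i,j} a_{ij}(x) ∂_{ij} v(x) ≤ 0 for all x ∈ Q₃, then (∫_{Q₁} v^ε dx)^{1/ε} ≤ C inf_{Q₂} v. -/

import Mathlib

open MeasureTheory Metric Set Filter
open scoped ENNReal NNReal Topology

noncomputable section

/-- Euclidean space `ℝⁿ`. -/
abbrev En (n : ℕ) := EuclideanSpace ℝ (Fin n)

/-- The second partial derivative `∂_{ij} v (x)`. -/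
def pd2 {n : ℕ} (v : En n → ℝ) (i j : Fin n) (x : En n) : ℝ :=
  fderiv ℝ (fun y => fderiv ℝ v y (EuclideanSpace.single i 1)) x (EuclideanSpace.single j 1)

/-- Measurable, uniformly elliptic coefficients on `Ω`:
`λ|ξ|² ≤ Σ aᵢⱼ(x) ξᵢ ξⱼ ≤ Λ|ξ|²` for every `x ∈ Ω` and all `ξ`. -/
def UnifEllipticOn {n : ℕ} (Ω : Set (En n)) (lam Lam : ℝ)
    (a : Fin n → Fin n → En n → ℝ) : Prop :=
  (∀ i j, Measurable (a i j)) ∧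
    ∀ x ∈ Ω, ∀ ξ : En n,
      lam * ∑ i, ξ i ^ 2 ≤ ∑ i, ∑ j, a i j x * ξ i * ξ j ∧
      ∑ i, ∑ j, a i j x * ξ i * ξ j ≤ Lam * ∑ i, ξ i ^ 2

/-- The open cube `(−r/2, r/2)ⁿ` centered at the origin with side length `r`. -/
def cube (n : ℕ) (r : ℝ) : Set (En n) := {x : En n | ∀ i, |x i| < r / 2}

/-- Trace inequality for positive semidefinite matrices. -/
lemma trace_ineq {n : ℕ} {lam : ℝ} (A : Fin n → Fin n → ℝ) (H : Matrix (Fin n) (Fin n) ℝ)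
    (hA : ∀ ξ : En n, lam * ∑ i, ξ i ^ 2 ≤ ∑ i, ∑ j, A i j * ξ i * ξ j)
    (hH : H.PosSemidef) : lam * ∑ i, H i i ≤ ∑ i, ∑ j, A i j * H i j := by
  obtain ⟨B, hB⟩ : ∃ B : Matrix (Fin n) (Fin n) ℝ, H = star B * B := by
    open scoped MatrixOrder Matrix.Norms.L2Operator in
    exact CStarAlgebra.nonneg_iff_eq_star_mul_self.mp hH.nonneg
  have hij : ∀ i j, H i j = ∑ k, B k i * B k j := by
    intro i j
    rw [hB, Matrix.mul_apply]
    simp [Matrix.star_apply]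
  have h1 : ∀ k, lam * ∑ i, B k i ^ 2 ≤ ∑ i, ∑ j, A i j * B k i * B k j := by
    intro k
    simpa using hA (WithLp.toLp 2 (B k))
  have h2 := Finset.sum_le_sum (fun k (_ : k ∈ Finset.univ) => h1 k)
  rw [← Finset.mul_sum] at h2
  have e1 : ∑ i, H i i = ∑ k, ∑ i, B k i ^ 2 := by
    rw [Finset.sum_comm]
    refine Finset.sum_congr rfl fun i _ => ?_
    rw [hij]
    exact Finset.sum_congr rfl fun k _ => by ring
  have e2 : ∑ i, ∑ j, A i j * H i j = ∑ k, ∑ i, ∑ j, A i j * B k i * B k j := by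
    symm
    rw [Finset.sum_comm]
    refine Finset.sum_congr rfl fun i _ => ?_
    rw [Finset.sum_comm]
    refine Finset.sum_congr rfl fun j _ => ?_
    rw [hij, Finset.mul_sum]
    exact Finset.sum_congr rfl fun k _ => by ring
  rw [e1, e2]; exact h2

lemma contDiffAt_fderiv {n : ℕ} {w : En n → ℝ} {x : En n} (hw : ContDiffAt ℝ 2 w x) :
    DifferentiableAt ℝ (fderiv ℝ w) x :=
  (hw.fderiv_right (m := 1) (by norm_num)).differentiableAt (by norm_num)

lemma pd2_eq {n : ℕ} {w : En n → ℝ} {x : En n} (hw : ContDiffAt ℝ 2 w x) (i j : Fin n) :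
    pd2 w i j x = fderiv ℝ (fderiv ℝ w) x (EuclideanSpace.single j 1)
      (EuclideanSpace.single i 1) := by
  unfold pd2
  rw [fderiv_clm_apply (contDiffAt_fderiv hw) (differentiableAt_const _)]
  simp

lemma hess_nonneg {n : ℕ} {w : En n → ℝ} {x : En n} (hw : ContDiffAt ℝ 2 w x)
    (hmin : IsLocalMin w x) (e : En n) : 0 ≤ fderiv ℝ (fderiv ℝ w) x e e := by
  by_contra hneg
  push Not at hneg
  set g : ℝ → ℝ := fun t => w (x + t • e) with hg
  have hl : ∀ t : ℝ, HasDerivAt (fun t : ℝ => x + t • e) e t := by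
    intro t
    simpa using ((hasDerivAt_id t).smul_const e).const_add x
  have hc : ContinuousAt (fun t : ℝ => x + t • e) 0 := (hl 0).continuousAt
  have hx0 : x + (0:ℝ) • e = x := by simp
  have hev : ∀ᶠ y in 𝓝 x, ContDiffAt ℝ 2 w y := hw.eventually (by simp)
  have hev' : ∀ᶠ t : ℝ in 𝓝 0, ContDiffAt ℝ 2 w (x + t • e) := by
    have : Tendsto (fun t : ℝ => x + t • e) (𝓝 0) (𝓝 x) := by
      have := hc.tendsto; rwa [hx0] at this
    exact this.eventually hev
  have hd : deriv g =ᶠ[𝓝 0] fun t => fderiv ℝ w (x + t • e) e := by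
    filter_upwards [hev'] with t ht
    have h1 := (ht.differentiableAt (by norm_num)).hasFDerivAt.comp_hasDerivAt t (hl t)
    exact h1.deriv
  have hdd : deriv (deriv g) 0 = fderiv ℝ (fderiv ℝ w) x e e := by
    rw [hd.deriv_eq]
    have h1 : HasFDerivAt (fderiv ℝ w) (fderiv ℝ (fderiv ℝ w) x) (x + (0:ℝ) • e) := by
      rw [hx0]; exact (contDiffAt_fderiv hw).hasFDerivAt
    have h2 := h1.comp_hasDerivAt (0:ℝ) (hl 0)
    have h3 := h2.clm_apply (hasDerivAt_const (0:ℝ) e)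
    simpa using h3.deriv
  have hgmin : IsLocalMin g 0 := by
    have : Tendsto (fun t : ℝ => x + t • e) (𝓝 0) (𝓝 x) := by
      have := hc.tendsto; rwa [hx0] at this
    have := this.eventually hmin
    filter_upwards [this] with t ht
    simpa [hg] using ht
  have hcg : ContinuousAt g 0 := by
    have : ContinuousAt w (x + (0:ℝ) • e) := by rw [hx0]; exact hw.continuousAt
    exact ContinuousAt.comp (f := fun t : ℝ => x + t • e) this hc
  have hmax : IsLocalMax g 0 :=
    isLocalMax_of_deriv_deriv_neg (by rw [hdd]; exact hneg) hgmin.deriv_eq_zero hcg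
  have hconst : g =ᶠ[𝓝 0] fun _ => g 0 := by
    filter_upwards [hgmin, hmax] with t h1 h2
    exact le_antisymm h2 h1
  have : deriv (deriv g) 0 = 0 := by
    rw [hconst.deriv.deriv_eq]
    simp
  rw [hdd] at this
  linarith

lemma posSemidef_pd2 {n : ℕ} {w : En n → ℝ} {x : En n} (hw : ContDiffAt ℝ 2 w x)
    (hmin : IsLocalMin w x) : (Matrix.of fun i j => pd2 w i j x).PosSemidef := by
  have hs : IsSymmSndFDerivAt ℝ w x := hw.isSymmSndFDerivAt (by simp)
  refine Matrix.PosSemidef.of_dotProduct_mulVec_nonneg ?_ ?_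
  · ext i j
    simp only [Matrix.conjTranspose_apply, Matrix.of_apply, star_trivial]
    rw [pd2_eq hw, pd2_eq hw]
    exact hs.eq _ _
  · intro e
    have h := hess_nonneg hw hmin (WithLp.toLp 2 e)
    have he : (WithLp.toLp 2 e : En n) = ∑ i, e i • EuclideanSpace.single i (1:ℝ) := by
      ext k
      simp [Pi.single_apply]
    have : star e ⬝ᵥ ((Matrix.of fun i j => pd2 w i j x).mulVec e) =
        fderiv ℝ (fderiv ℝ w) x (WithLp.toLp 2 e) (WithLp.toLp 2 e) := by
      rw [he]
      simp only [map_sum, map_smul, FunLike.coe_sum, FunLike.coe_smul,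
        Finset.sum_apply, Pi.smul_apply, smul_eq_mul, dotProduct, Matrix.mulVec, Matrix.of_apply,
        Pi.star_apply, star_trivial, pd2_eq hw, Finset.mul_sum]
      refine Finset.sum_congr rfl fun i _ => Finset.sum_congr rfl fun j _ => ?_
      ring
    rw [this]; exact h

lemma abs_entry_le {n : ℕ} {H : Matrix (Fin n) (Fin n) ℝ} (hH : H.PosSemidef) (i j : Fin n) :
    |H i j| ≤ ∑ k, H k k := by
  have hd : ∀ k, 0 ≤ H k k := fun k => hH.diag_nonneg
  have h1 : ∀ k, H k k ≤ ∑ k, H k k := fun k =>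
    Finset.single_le_sum (f := fun k => H k k) (fun k _ => hd k) (Finset.mem_univ k)
  have hsym : H j i = H i j := by simpa using hH.1.apply i j
  have hp : ∀ s : ℝ, 0 ≤ H i i + 2 * s * H i j + s ^ 2 * H j j := by
    intro s
    have h := hH.dotProduct_mulVec_nonneg (Pi.single i 1 + s • Pi.single j 1)
    simp [Matrix.mulVec_add, Matrix.mulVec_smul, add_dotProduct, dotProduct_add,
      hsym] at h
    nlinarith
  have a1 := hp 1
  have a2 := hp (-1)
  have := h1 i
  have := h1 j
  rw [abs_le]
  constructor <;> nlinarith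

lemma pd2_sub_smul {n : ℕ} {u φ : En n → ℝ} {x : En n} (c : ℝ) (hu : ContDiffAt ℝ 2 u x)
    (hφ : ContDiffAt ℝ 2 φ x) (i j : Fin n) :
    pd2 (fun y => u y - c * φ y) i j x = pd2 u i j x - c * pd2 φ i j x := by
  have e : fderiv ℝ (fun y => u y - c * φ y) =ᶠ[𝓝 x]
      fun y => fderiv ℝ u y - c • fderiv ℝ φ y := by
    filter_upwards [hu.eventually (by simp), hφ.eventually (by simp)] with y h1 h2
    have d1 := (h1.differentiableAt (by norm_num)).hasFDerivAt
    have d2 := (h2.differentiableAt (by norm_num)).hasFDerivAt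
    exact (d1.sub (d2.const_mul c)).fderiv
  rw [pd2_eq (hu.sub (contDiffAt_const.mul hφ)), pd2_eq hu, pd2_eq hφ, e.fderiv_eq]
  have d1 := (contDiffAt_fderiv hu).hasFDerivAt
  have d2 := (contDiffAt_fderiv hφ).hasFDerivAt
  have d3 : fderiv ℝ (fun y => fderiv ℝ u y - c • fderiv ℝ φ y) x = _ :=
    (d1.sub (d2.const_smul c)).fderiv
  rw [d3]
  simp

/-- The barrier `(R² - |x - z|²)^q`. -/
def bar {n : ℕ} (R : ℝ) (z : En n) (q : ℕ) (x : En n) : ℝ := (R ^ 2 - ∑ k, (x k - z k) ^ 2) ^ q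

lemma bar_contDiff {n : ℕ} (R : ℝ) (z : En n) (q : ℕ) : ContDiff ℝ 2 (bar R z q) := by
  unfold bar
  fun_prop

lemma bar_hasFDerivAt {n : ℕ} (R : ℝ) (z x : En n) (q : ℕ) :
    HasFDerivAt (bar R z q) ((q * (R ^ 2 - ∑ k, (x k - z k) ^ 2) ^ (q - 1)) •
      (-∑ k, (2 * (x k - z k)) • (EuclideanSpace.proj k : En n →L[ℝ] ℝ))) x := by
  have h1 : ∀ k, HasFDerivAt (fun y : En n => (y k - z k) ^ 2)
      ((2 * (x k - z k)) • (EuclideanSpace.proj k : En n →L[ℝ] ℝ)) x := by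
    intro k
    have := (((EuclideanSpace.proj k : En n →L[ℝ] ℝ).hasFDerivAt (x := x)).sub_const (z k)).pow 2
    simpa using this
  have h2 := (HasFDerivAt.fun_sum (u := Finset.univ) fun k _ => h1 k).const_sub (R ^ 2)
  have h3 := h2.pow q
  rw [nsmul_eq_mul] at h3
  exact h3

lemma bar_fderiv {n : ℕ} (R : ℝ) (z x : En n) (q : ℕ) (i : Fin n) :
    fderiv ℝ (bar R z q) x (EuclideanSpace.single i 1) =
      -(2 * q) * ((x i - z i) * bar R z (q - 1) x) := by
  rw [(bar_hasFDerivAt R z x q).fderiv]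
  simp [bar]
  ring

lemma bar_pd2 {n : ℕ} (R : ℝ) (z x : En n) (q : ℕ) (i j : Fin n) :
    pd2 (bar R z q) i j x =
      -(2 * q) * ((if i = j then 1 else 0) * bar R z (q - 1) x
        - (2 * (q - 1 : ℕ)) * bar R z (q - 1 - 1) x * ((x i - z i) * (x j - z j))) := by
  unfold pd2
  simp_rw [bar_fderiv]
  have h1 : HasFDerivAt (fun y : En n => y i - z i) (EuclideanSpace.proj i : En n →L[ℝ] ℝ) x :=
    ((EuclideanSpace.proj i : En n →L[ℝ] ℝ).hasFDerivAt (x := x)).sub_const (z i)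
  have h2 := bar_hasFDerivAt R z x (q - 1)
  have h3 := (h1.mul h2).const_mul (-(2 * (q:ℝ)))
  have h5 : fderiv ℝ (fun y => -(2 * (q:ℝ)) * ((y i - z i) * bar R z (q - 1) y)) x = _ := h3.fderiv
  rw [h5]
  have h4 := bar_fderiv R z x (q - 1) j
  rw [(bar_hasFDerivAt R z x (q - 1)).fderiv] at h4
  simp only [FunLike.coe_smul, FunLike.coe_add, Pi.smul_apply, Pi.add_apply, smul_eq_mul] at h4 ⊢
  rw [h4]
  have h6 : (EuclideanSpace.proj i : En n →L[ℝ] ℝ) (EuclideanSpace.single j 1) =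
      if i = j then 1 else 0 := by simp [Pi.single_apply]
  rw [h6]
  ring

lemma sumsq_eq {n : ℕ} (x z : En n) : ∑ k, (x k - z k) ^ 2 = dist x z ^ 2 := by
  rw [EuclideanSpace.dist_eq, Real.sq_sqrt (by positivity)]
  simp [Real.dist_eq, sq_abs]

lemma bar_eq {n : ℕ} (R : ℝ) (z : En n) (q : ℕ) (x : En n) :
    bar R z q x = (R ^ 2 - dist x z ^ 2) ^ q := by
  rw [bar, sumsq_eq]

lemma cube_isOpen (n : ℕ) (r : ℝ) : IsOpen (cube n r) := by
  have : cube n r = ⋂ i, {x : En n | |x i| < r / 2} := by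
    ext x; simp [cube]
  rw [this]
  exact isOpen_iInter_of_finite fun i => isOpen_lt (by fun_prop) continuous_const

/-- Positive `C²` supersolutions in `Q₃`. -/
def SupSol (n : ℕ) (lam Lam : ℝ) (a : Fin n → Fin n → En n → ℝ) (u : En n → ℝ) : Prop :=
  UnifEllipticOn (cube n 3) lam Lam a ∧ ContDiffOn ℝ 2 u (cube n 3) ∧
    (∀ x ∈ cube n 3, 0 < u x) ∧ ∀ x ∈ cube n 3, ∑ i, ∑ j, a i j x * pd2 u i j x ≤ 0

lemma SupSol.contDiffAt {n : ℕ} {lam Lam : ℝ} {a : Fin n → Fin n → En n → ℝ} {u : En n → ℝ}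
    (h : SupSol n lam Lam a u) {x : En n} (hx : x ∈ cube n 3) : ContDiffAt ℝ 2 u x :=
  h.2.1.contDiffAt ((cube_isOpen n 3).mem_nhds hx)

lemma SupSol.trace_le {n : ℕ} {lam Lam : ℝ} {a : Fin n → Fin n → En n → ℝ} {u : En n → ℝ}
    (h : SupSol n lam Lam a u) {x : En n} (hx : x ∈ cube n 3) : ∑ i, a i i x ≤ n * Lam := by
  have h1 : ∀ i, a i i x ≤ Lam := by
    intro i
    have := (h.1.2 x hx (EuclideanSpace.single i 1)).2
    simpa [Pi.single_apply, Finset.sum_ite_eq] using this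
  calc ∑ i, a i i x ≤ ∑ _i : Fin n, Lam := Finset.sum_le_sum fun i _ => h1 i
    _ = n * Lam := by simp

lemma bar_sum {n : ℕ} (A : Fin n → Fin n → ℝ) (R : ℝ) (z x : En n) (q : ℕ) :
    ∑ i, ∑ j, A i j * pd2 (bar R z q) i j x =
      -(2 * q) * (bar R z (q - 1) x * ∑ i, A i i -
        (2 * (q - 1 : ℕ)) * bar R z (q - 1 - 1) x *
          ∑ i, ∑ j, A i j * (x i - z i) * (x j - z j)) := by
  have : ∀ i j, A i j * pd2 (bar R z q) i j x =
      (-(2 * q) * bar R z (q - 1) x) * (if i = j then A i j else 0) +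
      ((2 * q) * ((2 * (q - 1 : ℕ)) * bar R z (q - 1 - 1) x)) *
        (A i j * (x i - z i) * (x j - z j)) := by
    intro i j
    rw [bar_pd2]
    split_ifs <;> ring
  simp_rw [this, Finset.sum_add_distrib, ← Finset.mul_sum]
  simp
  ring

set_option maxHeartbeats 1000000 in
/-- Weak Harnack type propagation through a barrier. -/
theorem barrier_lemma (n : ℕ) (hn : 2 ≤ n) (lam Lam : ℝ) (hlam : 0 < lam) (hLam : lam ≤ Lam)
    (R : ℝ) (hR : 1 ≤ R) : ∃ C : ℝ, 1 ≤ C ∧ ∀ a u, SupSol n lam Lam a u → ∀ (z : En n) (ρ : ℝ),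
      0 < ρ → closedBall z (R * ρ) ⊆ cube n 3 → ∀ x0, dist x0 z ≤ R * ρ / 2 →
      ∃ x1 ∈ closedBall z (ρ / 2), u x1 ≤ C * u x0 := by
  obtain ⟨k, hk⟩ := exists_nat_gt (2 * R ^ 2 * (n * Lam) / lam)
  rw [div_lt_iff₀ hlam] at hk
  refine ⟨2 ^ (k + 2), one_le_pow₀ (by norm_num), ?_⟩
  intro a u hu z ρ hρ hball x0 hx0
  by_contra hcon
  push Not at hcon
  have hRρ : 0 < R * ρ := by positivity
  have hx0m : x0 ∈ closedBall z (R * ρ) := by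
    rw [mem_closedBall]; linarith
  have hu0 : 0 < u x0 := hu.2.2.1 x0 (hball hx0m)
  set c : ℝ := 2 ^ (k + 2) * u x0 / ((R * ρ) ^ 2) ^ (k + 2) with hc
  have hcpos : 0 < c := by positivity
  set w : En n → ℝ := fun y => u y - c * bar (R * ρ) z (k + 2) y with hw
  have hwc : ∀ x ∈ closedBall z (R * ρ), ContDiffAt ℝ 2 w x := fun x hx =>
    (hu.contDiffAt (hball hx)).sub (contDiffAt_const.mul (bar_contDiff _ _ _).contDiffAt)
  have hwcont : ContinuousOn w (closedBall z (R * ρ)) := fun x hx =>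
    (hwc x hx).continuousAt.continuousWithinAt
  obtain ⟨x, hx, hxmin⟩ := (isCompact_closedBall z (R * ρ)).exists_isMinOn ⟨x0, hx0m⟩ hwcont
  have hw0 : w x0 < 0 := by
    have h1 : (3 / 4 * (R * ρ) ^ 2) ^ (k + 2) ≤ bar (R * ρ) z (k + 2) x0 := by
      rw [bar_eq]
      have : 0 ≤ dist x0 z := dist_nonneg
      refine pow_le_pow_left₀ (by positivity) ?_ _
      nlinarith
    have h2 : u x0 < c * (3 / 4 * (R * ρ) ^ 2) ^ (k + 2) := by
      have : c * (3 / 4 * (R * ρ) ^ 2) ^ (k + 2) = (3 / 2) ^ (k + 2) * u x0 := by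
        rw [hc, mul_pow (3 / 4 : ℝ)]
        have : (3 / 2 : ℝ) ^ (k + 2) = 2 ^ (k + 2) * (3 / 4) ^ (k + 2) := by
          rw [← mul_pow]; norm_num
        rw [this]
        field_simp
      rw [this]
      have : (1 : ℝ) < (3 / 2) ^ (k + 2) := one_lt_pow₀ (by norm_num) (by omega)
      nlinarith
    have h3 := mul_le_mul_of_nonneg_left h1 hcpos.le
    simp only [hw]
    linarith
  have hwx : w x < 0 := lt_of_le_of_lt (hxmin hx0m) hw0
  have hux : 0 < u x := hu.2.2.1 x (hball hx)
  have hxd : dist x z ≤ R * ρ := hx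
  have hlt : dist x z < R * ρ := by
    rcases hxd.lt_or_eq with h | h
    · exact h
    · exfalso
      have : bar (R * ρ) z (k + 2) x = 0 := by
        rw [bar_eq, h]; simp
      simp only [hw, this] at hwx
      linarith
  have hgt : ρ / 2 < dist x z := by
    by_contra hle
    push Not at hle
    have h1 := hcon x hle
    have h2 : bar (R * ρ) z (k + 2) x ≤ ((R * ρ) ^ 2) ^ (k + 2) := by
      rw [bar_eq]
      refine pow_le_pow_left₀ ?_ ?_ _
      · have : 0 ≤ dist x z := dist_nonneg
        nlinarith
      · nlinarith [sq_nonneg (dist x z)]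
    have h3 := mul_le_mul_of_nonneg_left h2 hcpos.le
    have h4 : c * ((R * ρ) ^ 2) ^ (k + 2) = 2 ^ (k + 2) * u x0 := by
      rw [hc]; field_simp
    simp only [hw] at hwx
    linarith
  have hloc : IsLocalMin w x :=
    hxmin.isLocalMin (mem_of_superset (isOpen_ball.mem_nhds (mem_ball.2 hlt)) ball_subset_closedBall)
  have hP := posSemidef_pd2 (hwc x hx) hloc
  have hxc := hball hx
  have htr := trace_ineq (fun i j => a i j x) _ (fun ξ => (hu.1.2 x hxc ξ).1) hP
  have hd : 0 ≤ lam * ∑ i, (Matrix.of fun i j => pd2 w i j x) i i :=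
    mul_nonneg hlam.le (Finset.sum_nonneg fun i _ => hP.diag_nonneg)
  have hsum : ∑ i, ∑ j, a i j x * (Matrix.of fun i j => pd2 w i j x) i j =
      ∑ i, ∑ j, a i j x * pd2 u i j x -
        c * ∑ i, ∑ j, a i j x * pd2 (bar (R * ρ) z (k + 2)) i j x := by
    simp only [Matrix.of_apply, hw, Finset.mul_sum, ← Finset.sum_sub_distrib]
    refine Finset.sum_congr rfl fun i _ => Finset.sum_congr rfl fun j _ => ?_
    rw [pd2_sub_smul c (hu.contDiffAt hxc) (bar_contDiff _ _ _).contDiffAt]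
    ring
  rw [hsum, bar_sum] at htr
  have hsup := hu.2.2.2 x hxc
  have hell := (hu.1.2 x hxc (x - z)).1
  simp only [PiLp.sub_apply] at hell
  rw [sumsq_eq] at hell
  have htrle := hu.trace_le hxc
  set S := ∑ i, ∑ j, a i j x * (x i - z i) * (x j - z j)
  set T := ∑ i, a i i x
  have e1 : k + 2 - 1 = k + 1 := rfl
  have e2 : k + 1 - 1 = k := rfl
  rw [e1, e2, bar_eq, bar_eq] at htr
  set s := (R * ρ) ^ 2 - dist x z ^ 2 with hs
  have hdn : 0 ≤ dist x z := dist_nonneg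
  have hspos : 0 < s := by rw [hs]; nlinarith
  have hsk : 0 < s ^ k := by positivity
  have hmain : s * T < 2 * (k + 1) * S := by
    have a1 : s * T ≤ (R * ρ) ^ 2 * (n * Lam) := by
      have b1 : s * T ≤ s * (n * Lam) := mul_le_mul_of_nonneg_left htrle hspos.le
      have hL : 0 ≤ (n : ℝ) * Lam := by
        have : 0 < Lam := lt_of_lt_of_le hlam hLam
        positivity
      have b2 : s * (n * Lam) ≤ (R * ρ) ^ 2 * (n * Lam) := by
        refine mul_le_mul_of_nonneg_right ?_ hL
        rw [hs]; nlinarith [sq_nonneg (dist x z)]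
      linarith
    have a2 : lam * (ρ ^ 2 / 4) ≤ S := by
      have : ρ ^ 2 / 4 ≤ dist x z ^ 2 := by nlinarith
      have := mul_le_mul_of_nonneg_left this hlam.le
      linarith
    have a3 : 2 * (k + 1) * (lam * (ρ ^ 2 / 4)) ≤ 2 * (k + 1) * S :=
      mul_le_mul_of_nonneg_left a2 (by positivity)
    have a4 : 2 * R ^ 2 * (n * Lam) * ρ ^ 2 < k * lam * ρ ^ 2 :=
      mul_lt_mul_of_pos_right hk (by positivity)
    have a5 : 0 < lam * ρ ^ 2 := by positivity
    have a6 : (R * ρ) ^ 2 * (n * Lam) = (2 * R ^ 2 * (n * Lam) * ρ ^ 2) / 2 := by ring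
    have a7 : 2 * (k + 1) * (lam * (ρ ^ 2 / 4)) = (k * lam * ρ ^ 2 + lam * ρ ^ 2) / 2 := by ring
    linarith
  have hpos : 0 < (2 * ((k + 2 : ℕ) : ℝ)) * s ^ k * (2 * (k + 1) * S - s * T) := by
    have : 0 < 2 * (k + 1) * S - s * T := by linarith
    positivity
  have heq : -(2 * ((k + 2 : ℕ) : ℝ)) * (s ^ (k + 1) * T - 2 * ((k + 1 : ℕ) : ℝ) * s ^ k * S) =
      (2 * ((k + 2 : ℕ) : ℝ)) * s ^ k * (2 * (k + 1) * S - s * T) := by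
    push_cast; ring
  rw [heq] at htr
  have := mul_pos hcpos hpos
  linarith

lemma clm_apply_sum {n : ℕ} (L : En n →L[ℝ] ℝ) (e : En n) :
    L e = ∑ j, e j * L (EuclideanSpace.single j 1) := by
  have he : e = ∑ i, e i • EuclideanSpace.single i (1:ℝ) := by
    ext k
    simp [Pi.single_apply]
  conv_lhs => rw [he]
  simp

/-- Sliding paraboloids: measure estimate around a point where `u` is small. -/
theorem sliding_lemma (n : ℕ) (hn : 2 ≤ n) (lam Lam : ℝ) (hlam : 0 < lam) (hLam : lam ≤ Lam) :
    ∃ D : ℝ, 0 < D ∧ ∀ a u, SupSol n lam Lam a u → ∀ (x1 : En n) (d : ℝ), 0 < d →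
      closedBall x1 d ⊆ cube n 3 → ∀ t, 0 < t → u x1 ≤ t →
      volume.real (ball x1 (d / 4)) ≤ D * volume.real (ball x1 d ∩ {x | u x ≤ 2 * t}) := by
  have hLp : 0 < Lam := lt_of_lt_of_le hlam hLam
  have hnp : (0 : ℝ) < n := by exact_mod_cast (by omega : 0 < n)
  set K : ℝ := n * Lam / lam with hK
  have hKpos : 0 < K := by positivity
  refine ⟨n.factorial * K ^ n, by positivity, ?_⟩
  intro a u hu x1 d hd hball t ht hut
  set α : ℝ := 8 * t / d ^ 2 with hα
  have hαp : 0 < α := by positivity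
  have hαd : α * d ^ 2 = 8 * t := by rw [hα]; field_simp
  set M : En n → Matrix (Fin n) (Fin n) ℝ := fun x =>
    Matrix.of fun i j => (if i = j then 1 else 0) + α⁻¹ * pd2 u i j x with hM
  set Φ : En n → En n := fun x =>
    WithLp.toLp 2 fun i => x i + α⁻¹ * fderiv ℝ u x (EuclideanSpace.single i 1) with hΦ
  set T : Set (En n) := (ball x1 d ∩ {x | u x ≤ 2 * t}) ∩ {x | ∀ i j, |M x i j| ≤ K} with hT
  have hcont : ContinuousOn u (ball x1 d) := fun x hx =>
    (hu.contDiffAt (hball (ball_subset_closedBall hx))).continuousAt.continuousWithinAt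
  have hmeas0 : MeasurableSet (ball x1 d ∩ {x | u x ≤ 2 * t}) := by
    have h1 : MeasurableSet (ball x1 d ∩ {x | 2 * t < u x}) :=
      (hcont.isOpen_inter_preimage isOpen_ball isOpen_Ioi).measurableSet
    have : ball x1 d ∩ {x | u x ≤ 2 * t} = ball x1 d \ (ball x1 d ∩ {x | 2 * t < u x}) := by
      ext x; simp
    rw [this]
    exact measurableSet_ball.diff h1
  have hpm : ∀ i j, Measurable (pd2 u i j) := fun i j => measurable_fderiv_apply_const ℝ _ _
  have hmeasT : MeasurableSet T := by
    refine hmeas0.inter ?_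
    have : {x | ∀ i j, |M x i j| ≤ K} = ⋂ i, ⋂ j, {x | |M x i j| ≤ K} := by
      ext x; simp
    rw [this]
    refine MeasurableSet.iInter fun i => MeasurableSet.iInter fun j => ?_
    refine measurableSet_le ?_ measurable_const
    have : Measurable fun x => M x i j := by
      simp only [hM, Matrix.of_apply]
      exact ((hpm i j).const_mul _).const_add _
    exact this.abs
  have hder : ∀ x ∈ T, HasFDerivWithinAt Φ (Matrix.toEuclideanCLM (𝕜 := ℝ) (M x)) T x := by
    intro x hx
    rw [hasFDerivWithinAt_euclidean]
    intro i
    have hc := hu.contDiffAt (hball (ball_subset_closedBall hx.1.1))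
    have h1 : DifferentiableAt ℝ (fun y => fderiv ℝ u y (EuclideanSpace.single i 1)) x :=
      (contDiffAt_fderiv hc).clm_apply (differentiableAt_const _)
    have h2 := ((EuclideanSpace.proj i : En n →L[ℝ] ℝ).hasFDerivAt (x := x)).add
      (h1.hasFDerivAt.const_mul α⁻¹)
    have h3 := h2.hasFDerivWithinAt (s := T)
    refine h3.congr_fderiv ?_
    ext e
    rw [clm_apply_sum (EuclideanSpace.proj i + _) e, clm_apply_sum (ContinuousLinearMap.comp _ _) e]
    refine Finset.sum_congr rfl fun j _ => ?_
    congr 1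
    have h6 : (Matrix.toEuclideanCLM (𝕜 := ℝ) (M x) (EuclideanSpace.single j 1) : En n) i =
        M x i j := by
      have h7 : (EuclideanSpace.single j 1 : En n) = WithLp.toLp 2 (Pi.single j 1) := rfl
      rw [h7, Matrix.toEuclideanCLM_toLp, Matrix.mulVec_single_one]
      rfl
    have h8 : (EuclideanSpace.proj i : En n →L[ℝ] ℝ) (EuclideanSpace.single j 1) =
      if i = j then 1 else 0 := by simp [Pi.single_apply]
    refine Eq.trans ?_ h6.symm
    simp only [FunLike.coe_add, FunLike.coe_smul, Pi.add_apply, Pi.smul_apply, smul_eq_mul, h8,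
      hM, pd2, Matrix.of_apply]
  have himg : ball x1 (d / 4) ⊆ Φ '' T := by
    intro y hy
    set w : En n → ℝ := fun x => u x - (α / 2) * bar 0 y 1 x with hw
    have hwval : ∀ x, w x = u x + α / 2 * dist x y ^ 2 := by
      intro x; simp only [hw, bar_eq]; ring
    have hwc : ∀ x ∈ closedBall x1 d, ContDiffAt ℝ 2 w x := fun x hx =>
      (hu.contDiffAt (hball hx)).sub (contDiffAt_const.mul (bar_contDiff _ _ _).contDiffAt)
    have hwcont : ContinuousOn w (closedBall x1 d) := fun x hx =>
      (hwc x hx).continuousAt.continuousWithinAt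
    have hx1m : x1 ∈ closedBall x1 d := mem_closedBall_self hd.le
    obtain ⟨x, hx, hxmin⟩ := (isCompact_closedBall x1 d).exists_isMinOn ⟨x1, hx1m⟩ hwcont
    have hxx1 : w x ≤ w x1 := hxmin hx1m
    rw [hwval, hwval] at hxx1
    have hyd : dist y x1 < d / 4 := hy
    have hy1 : dist x1 y ^ 2 ≤ d ^ 2 / 16 := by
      rw [dist_comm]
      have : 0 ≤ dist y x1 := dist_nonneg
      nlinarith
    have hy2 := mul_le_mul_of_nonneg_left hy1 hαp.le
    have hux : 0 < u x := hu.2.2.1 x (hball hx)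
    have hxy0 : 0 ≤ α * dist x y ^ 2 := by positivity
    have hle : u x ≤ 2 * t := by linarith
    have hlt : dist x x1 < d := by
      by_contra hge
      push Not at hge
      have h1 : dist x x1 ≤ dist x y + dist y x1 := dist_triangle _ _ _
      have h2 : 3 / 4 * d ≤ dist x y := by linarith
      have h3 : 9 / 16 * d ^ 2 ≤ dist x y ^ 2 := by nlinarith
      have h4 := mul_le_mul_of_nonneg_left h3 hαp.le
      linarith
    have hloc : IsLocalMin w x :=
      hxmin.isLocalMin
        (mem_of_superset (isOpen_ball.mem_nhds (mem_ball.2 hlt)) ball_subset_closedBall)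
    have hxc := hball hx
    have hpd : ∀ i j, pd2 w i j x = pd2 u i j x + α * (if i = j then 1 else 0) := by
      intro i j
      rw [pd2_sub_smul (α / 2) (hu.contDiffAt hxc) (bar_contDiff _ _ _).contDiffAt, bar_pd2]
      simp [bar]
      split_ifs <;> ring
    have hP := posSemidef_pd2 (hwc x hx) hloc
    have htr := trace_ineq (fun i j => a i j x) _ (fun ξ => (hu.1.2 x hxc ξ).1) hP
    have hsum : ∑ i, ∑ j, a i j x * (Matrix.of fun i j => pd2 w i j x) i j =
        ∑ i, ∑ j, a i j x * pd2 u i j x + α * ∑ i, a i i x := by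
      simp only [Matrix.of_apply, hpd, mul_add, Finset.sum_add_distrib]
      congr 1
      rw [Finset.mul_sum]
      refine Finset.sum_congr rfl fun i _ => ?_
      simp
      ring
    rw [hsum] at htr
    have hsup := hu.2.2.2 x hxc
    have htrle := mul_le_mul_of_nonneg_left (hu.trace_le hxc) hαp.le
    set W : Matrix (Fin n) (Fin n) ℝ := Matrix.of fun i j => pd2 w i j x with hW
    have hWtr : ∑ i, W i i ≤ α * K := by
      have : lam * ∑ i, W i i ≤ α * (n * Lam) := by linarith
      rw [hK, ← mul_div_assoc, le_div_iff₀ hlam]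
      linarith
    refine ⟨x, ⟨⟨hlt, hle⟩, ?_⟩, ?_⟩
    · intro i j
      have h1 : M x i j = α⁻¹ * W i j := by
        simp only [hM, hW, Matrix.of_apply, hpd]
        field_simp
        ring
      rw [h1, abs_mul, abs_of_pos (inv_pos.2 hαp), inv_mul_le_iff₀ hαp]
      exact (abs_entry_le hP i j).trans hWtr
    · ext i
      have h0 := hloc.fderiv_eq_zero
      have h1 := ((hu.contDiffAt hxc).differentiableAt (by norm_num)).hasFDerivAt
      have h2 := ((bar_contDiff 0 y 1).differentiable (by norm_num) x).hasFDerivAt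
      have h3 : fderiv ℝ w x = _ := (h1.sub (h2.const_mul (α / 2))).fderiv
      rw [h3] at h0
      have h4 := congrArg (fun L : En n →L[ℝ] ℝ => L (EuclideanSpace.single i 1)) h0
      simp only [FunLike.coe_sub, FunLike.coe_smul, Pi.sub_apply, Pi.smul_apply, smul_eq_mul,
        bar_fderiv, FunLike.coe_zero, Pi.zero_apply] at h4
      simp only [bar, Nat.sub_self, pow_zero, Nat.cast_one] at h4
      have h5 : fderiv ℝ u x (EuclideanSpace.single i 1) = -(α * (x i - y i)) := by linarith
      simp only [hΦ, h5]
      field_simp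
      ring
  have hfin : volume (ball x1 d ∩ {x | u x ≤ 2 * t}) ≠ ⊤ :=
    ((measure_mono inter_subset_left).trans_lt measure_ball_lt_top).ne
  have h1 : volume (ball x1 (d / 4)) ≤
      ENNReal.ofReal (n.factorial * K ^ n) * volume (ball x1 d ∩ {x | u x ≤ 2 * t}) := by
    calc volume (ball x1 (d / 4)) ≤ volume (Φ '' T) := measure_mono himg
      _ ≤ ∫⁻ x in T, ENNReal.ofReal |(Matrix.toEuclideanCLM (𝕜 := ℝ) (M x)).det| :=
        addHaar_image_le_lintegral_abs_det_fderiv volume hmeasT hder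
      _ ≤ ∫⁻ x in T, ENNReal.ofReal (n.factorial * K ^ n) := by
        refine setLIntegral_mono measurable_const fun x hx => ENNReal.ofReal_le_ofReal ?_
        have h2 : (Matrix.toEuclideanCLM (𝕜 := ℝ) (M x)).det = (M x).det := by
          rw [ContinuousLinearMap.det, Matrix.coe_toEuclideanCLM_eq_toEuclideanLin,
            Matrix.toEuclideanLin_eq_toLin, LinearMap.det_toLin]
        rw [h2]
        have := Matrix.det_le (A := M x) (abv := AbsoluteValue.abs) (x := K) hx.2
        simpa using this
      _ = ENNReal.ofReal (n.factorial * K ^ n) * volume T := by simp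
      _ ≤ _ := by gcongr; exact inter_subset_left
  have h2 := ENNReal.toReal_mono (ENNReal.mul_ne_top ENNReal.ofReal_ne_top hfin) h1
  rw [ENNReal.toReal_mul, ENNReal.toReal_ofReal (by positivity)] at h2
  exact h2

/-- Half-open cube with lower corner `z` and side `l`. -/
def hcube {n : ℕ} (z : En n) (l : ℝ) : Set (En n) := {x | ∀ i, z i ≤ x i ∧ x i < z i + l}

/-- The center of `hcube z l`. -/
def ctr {n : ℕ} (z : En n) (l : ℝ) : En n := WithLp.toLp 2 fun i => z i + l / 2

lemma dist_le_of_coord {n : ℕ} {x y : En n} {δ : ℝ} (hδ : 0 ≤ δ) (h : ∀ i, |x i - y i| ≤ δ) :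
    dist x y ≤ n * δ := by
  have h1 : dist x y ^ 2 ≤ (n * δ) ^ 2 := by
    rw [← sumsq_eq]
    calc ∑ k, (x k - y k) ^ 2 ≤ ∑ _k : Fin n, δ ^ 2 :=
          Finset.sum_le_sum fun k _ => by
            rw [← sq_abs]; exact pow_le_pow_left₀ (abs_nonneg _) (h k) 2
      _ = n * δ ^ 2 := by simp
      _ ≤ (n * δ) ^ 2 := by
        rw [mul_pow]
        refine mul_le_mul_of_nonneg_right ?_ (sq_nonneg _)
        exact_mod_cast Nat.le_self_pow (by norm_num) n
  exact le_of_sq_le_sq h1 (by positivity)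

lemma coord_le_dist {n : ℕ} (x y : En n) (i : Fin n) : |x i - y i| ≤ dist x y := by
  refine abs_le_of_sq_le_sq ?_ dist_nonneg
  rw [← sumsq_eq]
  exact Finset.single_le_sum (f := fun k => (x k - y k) ^ 2) (fun k _ => sq_nonneg _)
    (Finset.mem_univ i)

lemma ball_ctr_subset {n : ℕ} (z : En n) (l : ℝ) : ball (ctr z l) (l / 2) ⊆ hcube z l := by
  intro x hx i
  have h1 := coord_le_dist x (ctr z l) i
  have h2 : dist x (ctr z l) < l / 2 := hx
  have h3 := abs_lt.1 (lt_of_le_of_lt h1 h2)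
  simp only [ctr] at h3
  constructor <;> linarith [h3.1, h3.2]

lemma measurableSet_hcube {n : ℕ} (z : En n) (l : ℝ) : MeasurableSet (hcube z l) := by
  have : hcube z l = ⋂ i, ({x : En n | z i ≤ x i} ∩ {x : En n | x i < z i + l}) := by
    ext x; simp [hcube]
  rw [this]
  refine MeasurableSet.iInter fun i => MeasurableSet.inter ?_ ?_
  · exact (isClosed_le continuous_const (by fun_prop)).measurableSet
  · exact (isOpen_lt (by fun_prop) continuous_const).measurableSet

lemma hcube_subset_ball {n : ℕ} (hn : 2 ≤ n) (z : En n) {l : ℝ} (hl : 0 < l) :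
    hcube z l ⊆ ball (ctr z l) (n * l) := by
  intro x hx
  have hnp : (0 : ℝ) < n := by exact_mod_cast (by omega : 0 < n)
  have : dist x (ctr z l) ≤ n * (l / 2) := by
    refine dist_le_of_coord (by positivity) fun i => ?_
    have := hx i
    simp only [ctr]
    rw [abs_le]; constructor <;> linarith [this.1, this.2]
  rw [mem_ball]
  nlinarith

/-- The lower corners of the dyadic children. -/
def child {n : ℕ} (z : En n) (l : ℝ) (σ : Fin n → Bool) : En n :=
  WithLp.toLp 2 fun i => z i + if σ i then l else 0

lemma hcube_split {n : ℕ} (z : En n) {l : ℝ} (hl : 0 < l) :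
    hcube z (2 * l) = ⋃ σ, hcube (child z l σ) l := by
  ext x
  simp only [hcube, child, Set.mem_ofPred_eq, mem_iUnion]
  constructor
  · intro h
    refine ⟨fun i => decide (z i + l ≤ x i), fun i => ?_⟩
    have := h i
    by_cases hi : z i + l ≤ x i
    · simp only [hi, decide_true, if_true]
      exact ⟨trivial, by linarith [this.2]⟩
    · simp [hi]
      push Not at hi
      exact ⟨this.1, hi⟩
  · rintro ⟨σ, h⟩ i
    have := h i
    split_ifs at this <;> constructor <;> linarith [this.1, this.2]

lemma hcube_split_disjoint {n : ℕ} (z : En n) (l : ℝ) :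
    Pairwise (Function.onFun Disjoint fun σ : Fin n → Bool => hcube (child z l σ) l) := by
  intro σ τ hne
  rw [Function.onFun, Set.disjoint_left]
  intro x h1 h2
  obtain ⟨i, hi⟩ := Function.ne_iff.1 hne
  have a1 := h1 i
  have a2 := h2 i
  simp only [child] at a1 a2
  cases hs : σ i <;> cases ht : τ i <;> simp_all <;> linarith [a1.1, a1.2, a2.1, a2.2]

lemma volume_hcube_lt_top {n : ℕ} (hn : 2 ≤ n) (z : En n) {l : ℝ} (hl : 0 < l) :
    volume (hcube z l) < ⊤ :=
  (measure_mono (hcube_subset_ball hn z hl)).trans_lt measure_ball_lt_top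

lemma volume_split {n : ℕ} (hn : 2 ≤ n) (z : En n) {l : ℝ} (hl : 0 < l) {S : Set (En n)}
    (hS : MeasurableSet S) :
    volume.real (hcube z (2 * l) ∩ S) = ∑ σ, volume.real (hcube (child z l σ) l ∩ S) := by
  rw [hcube_split z hl, iUnion_inter]
  have := measureReal_biUnion_finset (μ := volume) (s := (Finset.univ : Finset (Fin n → Bool)))
    (f := fun σ => hcube (child z l σ) l ∩ S) ?_ ?_ ?_
  · simpa using this
  · intro σ _ τ _ h
    exact (hcube_split_disjoint z l h).mono inter_subset_left inter_subset_left
  · intro σ _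
    exact (measurableSet_hcube _ _).inter hS
  · intro σ _
    exact ((measure_mono inter_subset_left).trans_lt (volume_hcube_lt_top hn _ hl)).ne

/-- Superlevel sets. -/
def slev {n : ℕ} (u : En n → ℝ) (s : ℝ) : Set (En n) := cube n 3 ∩ u ⁻¹' Ioi s

lemma SupSol.measurableSet_slev {n : ℕ} {lam Lam : ℝ} {a : Fin n → Fin n → En n → ℝ}
    {u : En n → ℝ} (h : SupSol n lam Lam a u) (s : ℝ) : MeasurableSet (slev u s) :=
  (h.2.1.continuousOn.isOpen_inter_preimage (cube_isOpen n 3) isOpen_Ioi).measurableSet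

/-- Density lemma. -/
theorem density_lemma (n : ℕ) (hn : 2 ≤ n) (lam Lam : ℝ) (hlam : 0 < lam) (hLam : lam ≤ Lam) :
    ∃ M μ : ℝ, 2 ≤ M ∧ 0 < μ ∧ μ < 1 ∧ ∀ a u, SupSol n lam Lam a u → ∀ (z : En n) (l : ℝ),
      0 < l → closedBall (ctr z l) (4 * n * l) ⊆ cube n 3 → ∀ x0, dist x0 (ctr z l) ≤ 2 * n * l →
      (∃ x1 ∈ hcube z l, u x1 ≤ M * u x0) ∧
        volume.real (hcube z l ∩ slev u (M * u x0)) ≤ (1 - μ) * volume.real (hcube z l) := by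
  have hn2 : (2 : ℝ) ≤ n := by exact_mod_cast hn
  obtain ⟨C, hC, hbar⟩ := barrier_lemma n hn lam Lam hlam hLam (8 * n) (by linarith)
  obtain ⟨D, hD, hsl⟩ := sliding_lemma n hn lam Lam hlam hLam
  set m : ℝ := 1 / (D * (16 * n) ^ n) with hm
  have hmp : 0 < m := by positivity
  refine ⟨2 * C, min m (1 / 2), by linarith, by positivity, ?_, ?_⟩
  · exact (min_le_right _ _).trans_lt (by norm_num)
  intro a u hu z l hl hball x0 hx0
  have hR : 8 * (n : ℝ) * (l / 2) = 4 * n * l := by ring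
  obtain ⟨x1, hx1, hux1⟩ := hbar a u hu (ctr z l) (l / 2) (by positivity) (by rw [hR]; exact hball)
    x0 (by rw [hR]; linarith)
  have hx1d : dist x1 (ctr z l) ≤ l / 2 / 2 := hx1
  have hnl : 2 * l ≤ n * l := mul_le_mul_of_nonneg_right hn2 hl.le
  have hx0c : x0 ∈ cube n 3 := hball (by rw [mem_closedBall]; linarith)
  have hu0 := hu.2.2.1 x0 hx0c
  have hsub0 : closedBall x1 (l / 4) ⊆ cube n 3 := by
    refine Subset.trans ?_ hball
    exact closedBall_subset_closedBall' (by linarith)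
  have hsub : ball x1 (l / 4) ⊆ hcube z l := by
    refine Subset.trans ?_ (ball_ctr_subset z l)
    exact ball_subset_ball' (by linarith)
  have hm1 := hsl a u hu x1 (l / 4) (by positivity) hsub0 (C * u x0) (by positivity) hux1
  refine ⟨⟨x1, hsub (mem_ball_self (by positivity)), by nlinarith⟩, ?_⟩
  set V := volume.real (hcube z l) with hV
  set S := slev u (2 * C * u x0) with hS
  have hfin : volume (hcube z l) ≠ ⊤ := (volume_hcube_lt_top hn z hl).ne
  have hadd : volume.real (hcube z l ∩ S) + volume.real (hcube z l \ S) = V :=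
    measureReal_inter_add_diff (hu.measurableSet_slev _) hfin
  have hm2 : volume.real (ball x1 (l / 4) ∩ {x | u x ≤ 2 * (C * u x0)}) ≤
      volume.real (hcube z l \ S) := by
    refine measureReal_mono ?_ ((measure_mono diff_subset).trans_lt hfin.lt_top).ne
    rintro x ⟨h1, h2⟩
    refine ⟨hsub h1, fun h3 => ?_⟩
    have h4 : 2 * C * u x0 < u x := h3.2
    have h5 : u x ≤ 2 * (C * u x0) := h2
    linarith
  have : Nonempty (Fin n) := ⟨⟨0, by omega⟩⟩
  have hball1 : ∀ (x : En n) (r : ℝ), 0 < r →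
      volume.real (ball x r) = r ^ n * volume.real (ball (0 : En n) 1) := by
    intro x r hr
    rw [measureReal_def, Measure.addHaar_ball volume x hr.le, ENNReal.toReal_mul,
      ENNReal.toReal_ofReal (by positivity)]
    simp [measureReal_def]
  have hm3 : V ≤ (16 * n) ^ n * volume.real (ball x1 (l / 4 / 4)) := by
    have h1 : V ≤ volume.real (ball (ctr z l) (n * l)) :=
      measureReal_mono (hcube_subset_ball hn z hl) measure_ball_lt_top.ne
    rw [hball1 _ _ (by positivity)] at h1
    rw [hball1 _ _ (by positivity), ← mul_assoc, ← mul_pow]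
    have : 16 * (n : ℝ) * (l / 4 / 4) = n * l := by ring
    rw [this]; exact h1
  have hV0 : 0 ≤ V := measureReal_nonneg
  have hm4 : m * V ≤ volume.real (hcube z l \ S) := by
    rw [hm, div_mul_eq_mul_div, one_mul, div_le_iff₀ (by positivity)]
    have h1 := hm1.trans (mul_le_mul_of_nonneg_left hm2 hD.le)
    have h2 := mul_le_mul_of_nonneg_left h1 (by positivity : (0 : ℝ) ≤ (16 * n) ^ n)
    nlinarith
  have hm5 : min m (1 / 2) * V ≤ m * V := mul_le_mul_of_nonneg_right (min_le_left _ _) hV0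
  linarith

/-- Cubes contained in the unit cube. -/
def Good {n : ℕ} (z : En n) (l : ℝ) : Prop := ∀ i, -(1 / 2) ≤ z i ∧ z i + l ≤ 1 / 2

/-- The closed unit cube. -/
def ccube (n : ℕ) : Set (En n) := {x | ∀ i, |x i| ≤ 1 / 2}

lemma ccube_compact (n : ℕ) : IsCompact (ccube n) := by
  refine Metric.isCompact_of_isClosed_isBounded ?_ ?_
  · have : ccube n = ⋂ i, {x : En n | |x i| ≤ 1 / 2} := by
      ext x; simp [ccube]
    rw [this]
    exact isClosed_iInter fun i => isClosed_le (by fun_prop) continuous_const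
  · refine (Metric.isBounded_closedBall (x := (0 : En n)) (r := n * (1 / 2))).subset ?_
    intro x hx
    rw [mem_closedBall]
    exact dist_le_of_coord (by norm_num) fun i => by simpa using hx i

lemma ccube_subset (n : ℕ) : ccube n ⊆ cube n 3 := by
  intro x hx i
  have := hx i
  linarith

lemma Good.subset {n : ℕ} {z : En n} {l : ℝ} (h : Good z l) : hcube z l ⊆ ccube n := by
  intro x hx i
  have h1 := h i
  have h2 := hx i
  rw [abs_le]; constructor <;> linarith [h1.1, h1.2, h2.1, h2.2]

lemma Good.child {n : ℕ} {z : En n} {l : ℝ} (hl : 0 < l) (h : Good z (2 * l))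
    (σ : Fin n → Bool) : Good (child z l σ) l := by
  intro i
  have := h i
  simp only [_root_.child]
  split_ifs <;> constructor <;> linarith [this.1, this.2]

lemma Good.ball {n : ℕ} {z : En n} {l : ℝ} (hl : 0 < l) (hl1 : 8 * n * l ≤ 1) (h : Good z l) :
    closedBall (ctr z l) (4 * n * l) ⊆ cube n 3 := by
  intro x hx i
  have h1 := (coord_le_dist x (ctr z l) i).trans hx
  have h2 := h i
  rw [abs_le] at h1
  simp only [ctr] at h1
  rw [abs_lt]; constructor <;> linarith [h1.1, h1.2, h2.1, h2.2]

lemma dist_ctr {n : ℕ} {z x : En n} {l : ℝ} (hl : 0 < l) (hx : x ∈ hcube z l) :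
    dist x (ctr z l) ≤ 2 * n * l := by
  have : dist x (ctr z l) ≤ n * (2 * l) := by
    refine dist_le_of_coord (by positivity) fun i => ?_
    have := hx i
    simp only [ctr]
    rw [abs_le]; constructor <;> linarith [this.1, this.2]
  linarith

lemma dist_ctr_child {n : ℕ} {z x : En n} {l : ℝ} (hl : 0 < l) (hx : x ∈ hcube z (2 * l))
    (σ : Fin n → Bool) : dist x (ctr (child z l σ) l) ≤ 2 * n * l := by
  have : dist x (ctr (child z l σ) l) ≤ n * (2 * l) := by
    refine dist_le_of_coord (by positivity) fun i => ?_
    have := hx i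
    simp only [ctr, child]
    rw [abs_le]; split_ifs <;> constructor <;> linarith [this.1, this.2]
  linarith

lemma integral_split {n : ℕ} {U : En n → ℝ} (hU : IntegrableOn U (ccube n)) {z : En n} {l : ℝ}
    (hl : 0 < l) (h : Good z (2 * l)) :
    ∫ x in hcube z (2 * l), U x = ∑ σ, ∫ x in hcube (child z l σ) l, U x := by
  rw [hcube_split z hl]
  refine integral_iUnion_fintype (fun σ => measurableSet_hcube _ _) (hcube_split_disjoint z l) ?_
  intro σ
  exact hU.mono_set (h.child hl σ).subset

lemma integral_hcube_le {n : ℕ} (hn : 2 ≤ n) {U : En n → ℝ} (hU : IntegrableOn U (ccube n))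
    {z : En n} {l : ℝ} (hl : 0 < l) (h : Good z l) (c : ℝ) (hc : ∀ x ∈ hcube z l, U x ≤ c) :
    ∫ x in hcube z l, U x ≤ c * volume.real (hcube z l) := by
  have h1 := setIntegral_mono_on (hU.mono_set h.subset)
    (integrableOn_const (C := c) (volume_hcube_lt_top hn z hl).ne)
    (measurableSet_hcube z l) hc
  simpa [mul_comm] using h1

/-- The dyadic induction. -/
theorem dyadic_induction (n : ℕ) (hn : 2 ≤ n) (lam Lam M μ ε P K : ℝ) (hM : 2 ≤ M)
    (hμ1 : μ < 1) (hε : 0 < ε) (hP1 : 1 ≤ P) (hMP : M ^ ε = P)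
    (hK : P ^ 2 + K * P ^ 2 * (1 - μ) ≤ K)
    (hdens : ∀ a u, SupSol n lam Lam a u → ∀ (z : En n) (l : ℝ),
      0 < l → closedBall (ctr z l) (4 * n * l) ⊆ cube n 3 → ∀ x0, dist x0 (ctr z l) ≤ 2 * n * l →
      (∃ x1 ∈ hcube z l, u x1 ≤ M * u x0) ∧
        volume.real (hcube z l ∩ slev u (M * u x0)) ≤ (1 - μ) * volume.real (hcube z l))
    (hK0 : P ≤ K)
    (a : Fin n → Fin n → En n → ℝ) (u : En n → ℝ) (hu : SupSol n lam Lam a u)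
    (hU : IntegrableOn (fun x => u x ^ ε) (ccube n))
    (l : ℝ) (hl : 0 < l)
    (hbase : ∀ z : En n, Good z l → ∀ x ∈ hcube z l, ∀ y ∈ hcube z l, u x ≤ 2 * u y) (k : ℕ) :
    8 * n * (2 ^ k * l) ≤ 1 →
    (∀ z : En n, Good z (2 ^ k * l) → ∀ x0 ∈ hcube z (2 ^ k * l),
      ∫ x in hcube z (2 ^ k * l), u x ^ ε ≤
        K * volume.real (hcube z (2 ^ k * l)) * u x0 ^ ε) ∧
    (∀ z : En n, Good z (2 ^ k * l) → ∀ s, 0 < s → (∃ x0 ∈ hcube z (2 ^ k * l), u x0 ≤ M * s) →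
      ∫ x in hcube z (2 ^ k * l), u x ^ ε ≤
        P * s ^ ε * volume.real (hcube z (2 ^ k * l)) +
          K * P * s ^ ε * volume.real (hcube z (2 ^ k * l) ∩ slev u s)) := by
  have hKp : 0 < K := by linarith
  have hM0 : 0 ≤ M := by linarith
  have hpos : ∀ {z : En n} {r : ℝ}, Good z r → ∀ x ∈ hcube z r, 0 < u x := fun h x hx =>
    hu.2.2.1 x (ccube_subset n (h.subset hx))
  have hMs : ∀ s : ℝ, 0 ≤ s → (M * s) ^ ε = P * s ^ ε := by
    intro s hs
    rw [Real.mul_rpow hM0 hs, hMP]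
  -- second claim from the first one when `u > s` on the whole cube
  have hB : ∀ (z : En n) (r : ℝ), Good z r → (∀ x0 ∈ hcube z r,
      ∫ x in hcube z r, u x ^ ε ≤ K * volume.real (hcube z r) * u x0 ^ ε) → ∀ s, 0 < s →
      (∃ x0 ∈ hcube z r, u x0 ≤ M * s) → (∀ x ∈ hcube z r, s < u x) →
      ∫ x in hcube z r, u x ^ ε ≤ P * s ^ ε * volume.real (hcube z r) +
          K * P * s ^ ε * volume.real (hcube z r ∩ slev u s) := by
    rintro z r hg hA s hs ⟨x0, hx0, hx0s⟩ hall
    have h1 : hcube z r ∩ slev u s = hcube z r :=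
      inter_eq_left.2 fun x hx => ⟨ccube_subset n (hg.subset hx), hall x hx⟩
    rw [h1]
    have h2 := hA x0 hx0
    have h3 : u x0 ^ ε ≤ P * s ^ ε := by
      rw [← hMs s hs.le]
      exact Real.rpow_le_rpow (hpos hg x0 hx0).le hx0s hε.le
    have hv : 0 ≤ volume.real (hcube z r) := measureReal_nonneg
    have h4 := mul_le_mul_of_nonneg_left h3 (mul_nonneg hKp.le hv)
    have h5 : 0 ≤ P * s ^ ε * volume.real (hcube z r) := by positivity
    linarith
  induction k with
  | zero =>
    intro hl1
    simp only [pow_zero, one_mul] at hl1 ⊢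
    have hA : ∀ z : En n, Good z l → ∀ x0 ∈ hcube z l,
        ∫ x in hcube z l, u x ^ ε ≤ P * u x0 ^ ε * volume.real (hcube z l) := by
      intro z hg x0 hx0
      refine integral_hcube_le hn hU hl hg _ fun x hx => ?_
      have hp := hpos hg x0 hx0
      rw [← hMs _ hp.le]
      refine Real.rpow_le_rpow (hpos hg x hx).le ((hbase z hg x hx x0 hx0).trans ?_) hε.le
      exact mul_le_mul_of_nonneg_right hM hp.le
    have hA' : ∀ z : En n, Good z l → ∀ x0 ∈ hcube z l,
        ∫ x in hcube z l, u x ^ ε ≤ K * volume.real (hcube z l) * u x0 ^ ε := by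
      intro z hg x0 hx0
      refine (hA z hg x0 hx0).trans ?_
      have hp := hpos hg x0 hx0
      have h1 : 0 ≤ u x0 ^ ε * volume.real (hcube z l) := by positivity
      nlinarith [mul_le_mul_of_nonneg_right hK0 h1]
    refine ⟨hA', fun z hg s hs hex => ?_⟩
    by_cases hall : ∀ x ∈ hcube z l, s < u x
    · exact hB z l hg (hA' z hg) s hs hex hall
    · push Not at hall
      obtain ⟨x, hx, hxs⟩ := hall
      have h1 := hA z hg x hx
      have h2 : u x ^ ε ≤ s ^ ε := Real.rpow_le_rpow (hpos hg x hx).le hxs hε.le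
      have hv : 0 ≤ volume.real (hcube z l) := measureReal_nonneg
      have h3 : P * u x ^ ε * volume.real (hcube z l) ≤ P * s ^ ε * volume.real (hcube z l) := by
        gcongr
      have h4 : 0 ≤ K * P * s ^ ε * volume.real (hcube z l ∩ slev u s) := by positivity
      linarith
  | succ k ih =>
    intro hl1
    have e : (2 : ℝ) ^ (k + 1) * l = 2 * (2 ^ k * l) := by ring
    rw [e] at hl1 ⊢
    set r := (2 : ℝ) ^ k * l with hr
    have hrp : 0 < r := by positivity
    have hn0 : (0 : ℝ) ≤ n := Nat.cast_nonneg n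
    have hr1 : 8 * n * r ≤ 1 := by nlinarith [mul_nonneg hn0 hrp.le]
    obtain ⟨ihA, ihB⟩ := ih hr1
    -- splitting step
    have hsplit : ∀ z : En n, Good z (2 * r) → ∀ s, 0 < s → ∀ x ∈ hcube z (2 * r), u x ≤ s →
        ∫ x in hcube z (2 * r), u x ^ ε ≤ P * s ^ ε * volume.real (hcube z (2 * r)) +
          K * P * s ^ ε * volume.real (hcube z (2 * r) ∩ slev u s) := by
      intro z hg s hs x hx hxs
      rw [integral_split hU hrp hg, volume_split hn z hrp (hu.measurableSet_slev s)]
      have hv := volume_split hn z hrp (MeasurableSet.univ)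
      simp only [inter_univ] at hv
      rw [hv, Finset.mul_sum, Finset.mul_sum, ← Finset.sum_add_distrib]
      refine Finset.sum_le_sum fun σ _ => ?_
      have hgc := hg.child hrp σ
      refine ihB _ hgc s hs ?_
      obtain ⟨x1, hx1, hx1u⟩ :=
        (hdens a u hu _ r hrp (hgc.ball hrp hr1) x (dist_ctr_child hrp hx σ)).1
      exact ⟨x1, hx1, hx1u.trans (mul_le_mul_of_nonneg_left hxs hM0)⟩
    have hA : ∀ z : En n, Good z (2 * r) → ∀ x0 ∈ hcube z (2 * r),
        ∫ x in hcube z (2 * r), u x ^ ε ≤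
          K * volume.real (hcube z (2 * r)) * u x0 ^ ε := by
      intro z hg x0 hx0
      have hp := hpos hg x0 hx0
      have h1 := hsplit z hg (M * u x0) (by positivity) x0 hx0 (by nlinarith)
      have h2 := (hdens a u hu z (2 * r) (by positivity) (hg.ball (by positivity) hl1) x0
        (dist_ctr (by positivity) hx0)).2
      rw [hMs _ hp.le] at h1
      set V := volume.real (hcube z (2 * r))
      set A := u x0 ^ ε
      have hA0 : 0 ≤ A := by positivity
      have hV0 : 0 ≤ V := measureReal_nonneg
      have h3 := mul_le_mul_of_nonneg_left h2 (by positivity : 0 ≤ K * P * (P * A))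
      have h4 := mul_le_mul_of_nonneg_right hK (mul_nonneg hV0 hA0)
      linarith
    refine ⟨hA, fun z hg s hs hex => ?_⟩
    by_cases hall : ∀ x ∈ hcube z (2 * r), s < u x
    · exact hB z _ hg (hA z hg) s hs hex hall
    · push Not at hall
      obtain ⟨x, hx, hxs⟩ := hall
      exact hsplit z hg s hs x hx hxs

/-- Chains of balls. -/
theorem chain_lemma (n : ℕ) (hn : 2 ≤ n) (lam Lam : ℝ) (hlam : 0 < lam) (hLam : lam ≤ Lam)
    (ρ : ℝ) (hρ : 0 < ρ) (hρ1 : 8 * n * ρ ≤ 1 / 4) :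
    ∃ C : ℝ, 1 ≤ C ∧ ∀ a u, SupSol n lam Lam a u → ∀ y ∈ cube n 2, ∀ c ∈ ccube n,
      ∃ x1 ∈ closedBall c (ρ / 2), u x1 ≤ C * u y := by
  have hn2 : (2 : ℝ) ≤ n := by exact_mod_cast hn
  obtain ⟨C, hC, hbar⟩ := barrier_lemma n hn lam Lam hlam hLam (8 * n) (by linarith)
  obtain ⟨N, hN⟩ := exists_nat_gt (2 * n / ρ)
  have hN0 : (0 : ℝ) < N := lt_trans (by positivity) hN
  rw [div_lt_iff₀ hρ] at hN
  refine ⟨C ^ N, one_le_pow₀ hC, fun a u hu y hy c hc => ?_⟩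
  have key : ∀ j : ℕ, j ≤ N →
      ∃ x1 ∈ closedBall (y + ((j : ℝ) / N) • (c - y)) (ρ / 2), u x1 ≤ C ^ j * u y := by
    intro j
    induction j with
    | zero =>
      intro _
      refine ⟨y, ?_, by simp⟩
      simp; positivity
    | succ j ih =>
      intro hj
      obtain ⟨x, hx, hux⟩ := ih (by omega)
      have hstep : dist (y + ((j : ℝ) / N) • (c - y)) (y + (((j + 1 : ℕ) : ℝ) / N) • (c - y)) ≤ ρ := by
        have : dist (y + ((j : ℝ) / N) • (c - y)) (y + (((j + 1 : ℕ) : ℝ) / N) • (c - y))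
            ≤ n * (2 / N) := by
          refine dist_le_of_coord (by positivity) fun i => ?_
          have h1 := hy i
          have h2 := hc i
          have h3 : |c i - y i| ≤ 2 := by
            rw [abs_le] at *
            rw [abs_lt] at h1
            constructor <;> linarith [h1.1, h1.2, h2.1, h2.2]
          have : (y + ((j : ℝ) / N) • (c - y)) i - (y + (((j + 1 : ℕ) : ℝ) / N) • (c - y)) i
              = - ((c i - y i) / N) := by
            simp; field_simp; ring
          rw [this, abs_neg, abs_div, abs_of_pos hN0]
          gcongr
        refine this.trans ?_
        rw [mul_div_assoc', div_le_iff₀ hN0]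
        linarith
      have hb1 : closedBall (y + (((j + 1 : ℕ) : ℝ) / N) • (c - y)) (8 * n * ρ) ⊆ cube n 3 := by
        intro w hw i
        have h0 := (coord_le_dist w _ i).trans hw
        have h1 := abs_lt.1 (hy i)
        have h2 := abs_le.1 (hc i)
        have ht0 : 0 ≤ ((j + 1 : ℕ) : ℝ) / N := by positivity
        have ht1 : ((j + 1 : ℕ) : ℝ) / N ≤ 1 := by
          rw [div_le_one hN0]; exact_mod_cast hj
        set t := ((j + 1 : ℕ) : ℝ) / N
        have h3 : (y + t • (c - y)) i = (1 - t) * y i + t * c i := by simp; ring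
        rw [h3] at h0
        have h0 := abs_le.1 h0
        rw [abs_lt]
        constructor <;> nlinarith [h1.1, h1.2, h2.1, h2.2, h0.1, h0.2]
      have hb2 : dist x (y + (((j + 1 : ℕ) : ℝ) / N) • (c - y)) ≤ 8 * n * ρ / 2 := by
        refine (dist_triangle _ _ _).trans ((add_le_add (mem_closedBall.1 hx) hstep).trans ?_)
        nlinarith
      obtain ⟨x1, hx1, hu1⟩ := hbar a u hu _ ρ hρ hb1 x hb2
      refine ⟨x1, hx1, hu1.trans ?_⟩
      calc C * u x ≤ C * (C ^ j * u y) := by gcongr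
        _ = _ := by ring
  obtain ⟨x1, hx1, h⟩ := key N le_rfl
  rw [div_self hN0.ne', one_smul, add_sub_cancel] at hx1
  exact ⟨x1, hx1, h⟩

/-- Summing up over dyadic cubes. -/
theorem top_sum {n : ℕ} (hn : 2 ≤ n) {U : En n → ℝ} (hU : IntegrableOn U (ccube n)) (l : ℝ)
    (hl : 0 < l) (T : ℝ)
    (h : ∀ z, Good z l → ∫ x in hcube z l, U x ≤ T * volume.real (hcube z l)) (k : ℕ) :
    ∀ z, Good z (2 ^ k * l) →
      ∫ x in hcube z (2 ^ k * l), U x ≤ T * volume.real (hcube z (2 ^ k * l)) := by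
  induction k with
  | zero => simpa using h
  | succ k ih =>
    intro z hz
    have e : (2 : ℝ) ^ (k + 1) * l = 2 * (2 ^ k * l) := by ring
    have hp : 0 < (2 : ℝ) ^ k * l := by positivity
    rw [e] at hz ⊢
    have hv := volume_split hn z hp MeasurableSet.univ
    simp only [inter_univ] at hv
    rw [integral_split hU hp hz, hv, Finset.mul_sum]
    exact Finset.sum_le_sum fun σ _ => ih _ (hz.child hp σ)

/-- Base scale. -/
lemma base_scale {n : ℕ} (hn : 2 ≤ n) {u : En n → ℝ} (hu : ContinuousOn u (ccube n))
    (hpos : ∀ x ∈ ccube n, 0 < u x) (l0 : ℝ) :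
    ∃ N : ℕ, ∀ z, Good z (l0 / 2 ^ N) → ∀ x ∈ hcube z (l0 / 2 ^ N), ∀ y ∈ hcube z (l0 / 2 ^ N),
      u x ≤ 2 * u y := by
  have hne : (ccube n).Nonempty := ⟨0, fun i => by simp⟩
  obtain ⟨x0, hx0, hmin⟩ := (ccube_compact n).exists_isMinOn hne hu
  have hm := hpos x0 hx0
  have huc := (ccube_compact n).uniformContinuousOn_of_continuous hu
  obtain ⟨δ, hδ, hd⟩ := Metric.uniformContinuousOn_iff.1 huc (u x0) hm
  have ht : Tendsto (fun N : ℕ => n * (l0 * (1 / 2 : ℝ) ^ N)) atTop (𝓝 (n * (l0 * 0))) :=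
    ((tendsto_pow_atTop_nhds_zero_of_lt_one (by norm_num) (by norm_num)).const_mul _).const_mul _
  rw [mul_zero, mul_zero] at ht
  obtain ⟨N, hN⟩ := (ht.eventually_lt_const hδ).exists
  have e : l0 / 2 ^ N = l0 * (1 / 2 : ℝ) ^ N := by rw [one_div, inv_pow, div_eq_mul_inv]
  rw [← e] at hN
  refine ⟨N, fun z hz x hx y hy => ?_⟩
  have hx' := hz.subset hx
  have hy' := hz.subset hy
  have i0 : Fin n := ⟨0, by omega⟩
  have hl : 0 ≤ l0 / 2 ^ N := by
    have := hx i0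
    linarith [this.1, this.2]
  have h1 : dist x y ≤ n * (l0 / 2 ^ N) := by
    refine dist_le_of_coord hl fun i => ?_
    have h1 := hx i
    have h2 := hy i
    rw [abs_le]; constructor <;> linarith [h1.1, h1.2, h2.1, h2.2]
  have h2 := hd x hx' y hy' (h1.trans_lt hN)
  rw [Real.dist_eq, abs_lt] at h2
  have h3 : u x0 ≤ u y := hmin hy'
  linarith [h2.2]

/-- The estimate for positive supersolutions. -/
theorem pos_estimate (n : ℕ) (hn : 2 ≤ n) (lam Lam : ℝ) (hlam : 0 < lam) (hLam : lam ≤ Lam) :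
    ∃ ε K C : ℝ, 0 < ε ∧ 0 < K ∧ 1 ≤ C ∧ ∀ a u, SupSol n lam Lam a u → ∀ y ∈ cube n 2,
      ∫ x in cube n 1, u x ^ ε ≤ K * (C * u y) ^ ε := by
  have hn2 : (2 : ℝ) ≤ n := by exact_mod_cast hn
  obtain ⟨M, μ, hM, hμ, hμ1, hdens⟩ := density_lemma n hn lam Lam hlam hLam
  set l0 : ℝ := 1 / 2 ^ (n + 4) with hl0
  have hl0p : 0 < l0 := by positivity
  have hl01 : 16 * n * l0 ≤ 1 := by
    have : (n : ℝ) ≤ 2 ^ n := by exact_mod_cast Nat.lt_two_pow_self.le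
    rw [hl0, mul_one_div, div_le_one (by positivity), pow_add]
    linarith
  obtain ⟨C, hC, hchain⟩ := chain_lemma n hn lam Lam hlam hLam (l0 / 4) (by positivity)
    (by nlinarith)
  have hP : 1 < 1 + μ / 8 := by linarith
  have hlogM : 0 < Real.log M := Real.log_pos (by linarith)
  have hε : 0 < Real.log (1 + μ / 8) / Real.log M := div_pos (Real.log_pos hP) hlogM
  have hMP : M ^ (Real.log (1 + μ / 8) / Real.log M) = 1 + μ / 8 := by
    rw [Real.rpow_def_of_pos (by linarith), mul_div_cancel₀ _ hlogM.ne',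
      Real.exp_log (by linarith)]
  set ε := Real.log (1 + μ / 8) / Real.log M
  set P := 1 + μ / 8 with hPdef
  have hK : P ^ 2 + (2 * P ^ 2 / μ) * P ^ 2 * (1 - μ) ≤ 2 * P ^ 2 / μ := by
    have h1 : P ^ 2 * (1 - μ) ≤ 1 - μ / 2 := by
      rw [hPdef]; nlinarith [mul_pos hμ hμ, mul_pos hμ (mul_pos hμ hμ)]
    have h2 : 0 ≤ 2 * P ^ 2 / μ := by positivity
    have h3 := mul_le_mul_of_nonneg_left h1 h2
    have h4 : 2 * P ^ 2 / μ * (1 - μ / 2) = 2 * P ^ 2 / μ - P ^ 2 := by field_simp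
    linarith
  have hK0 : P ≤ 2 * P ^ 2 / μ := by
    rw [le_div_iff₀ hμ]; nlinarith
  set K := 2 * P ^ 2 / μ
  have hKp : 0 < K := by linarith
  set z0 : En n := WithLp.toLp 2 fun _ => -(1 / 2) with hz0
  refine ⟨ε, K * volume.real (hcube z0 1) + 1, C, hε, by positivity, hC, fun a u hu y hy => ?_⟩
  have hcont : ContinuousOn u (ccube n) := hu.2.1.continuousOn.mono (ccube_subset n)
  have hposc : ∀ x ∈ ccube n, 0 < u x := fun x hx => hu.2.2.1 x (ccube_subset n hx)
  have hU : IntegrableOn (fun x => u x ^ ε) (ccube n) :=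
    (hcont.rpow_const fun x hx => Or.inr hε.le).integrableOn_compact (ccube_compact n)
  have hy3 : y ∈ cube n 3 := fun i => by have := hy i; linarith
  have huy := hu.2.2.1 y hy3
  obtain ⟨N, hN⟩ := base_scale hn hcont hposc l0
  have e : (2 : ℝ) ^ N * (l0 / 2 ^ N) = l0 := by field_simp
  have hA := (dyadic_induction n hn lam Lam M μ ε P K hM hμ1 hε hP.le hMP hK hdens hK0 a u hu hU
    (l0 / 2 ^ N) (by positivity) hN N (by rw [e]; nlinarith)).1
  rw [e] at hA
  have hT : ∀ z, Good z l0 → ∫ x in hcube z l0, u x ^ ε ≤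
      (K * (C * u y) ^ ε) * volume.real (hcube z l0) := by
    intro z hz
    have hc : ctr z l0 ∈ ccube n := hz.subset (ball_ctr_subset z l0 (mem_ball_self (by linarith)))
    obtain ⟨x1, hx1, hux⟩ := hchain a u hu y hy _ hc
    have hx1' : x1 ∈ hcube z l0 := ball_ctr_subset z l0 (by
      rw [mem_closedBall] at hx1
      rw [mem_ball]; linarith)
    refine (hA z hz x1 hx1').trans ?_
    have hp := hposc x1 (hz.subset hx1')
    have : u x1 ^ ε ≤ (C * u y) ^ ε := Real.rpow_le_rpow hp.le hux hε.le
    calc K * volume.real (hcube z l0) * u x1 ^ ε ≤ K * volume.real (hcube z l0) * (C * u y) ^ ε := by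
          gcongr
      _ = _ := by ring
  have e1 : (2 : ℝ) ^ (n + 4) * l0 = 1 := by rw [hl0]; field_simp
  have hgood : Good z0 1 := fun i => by simp only [hz0]; constructor <;> norm_num
  have hfin := top_sum hn hU l0 hl0p _ hT (n + 4) z0 (by rw [e1]; exact hgood)
  rw [e1] at hfin
  have hsub : cube n 1 ⊆ hcube z0 1 := fun x hx i => by
    have := abs_lt.1 (hx i)
    simp only [hz0]
    constructor <;> linarith [this.1, this.2]
  have hmono : ∫ x in cube n 1, u x ^ ε ≤ ∫ x in hcube z0 1, u x ^ ε := by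
    refine setIntegral_mono_set (hU.mono_set hgood.subset) ?_ hsub.eventuallyLE
    refine (ae_restrict_iff' (measurableSet_hcube z0 1)).2 (Eventually.of_forall fun x hx => ?_)
    exact Real.rpow_nonneg (hposc x (hgood.subset hx)).le _
  have hq : 0 ≤ (C * u y) ^ ε := by positivity
  nlinarith

lemma pd2_add_const {n : ℕ} (v : En n → ℝ) (δ : ℝ) (i j : Fin n) (x : En n) :
    pd2 (fun y => v y + δ) i j x = pd2 v i j x := by
  simp only [pd2, fderiv_add_const]

/-- **`L^ε` estimate.** There are `ε > 0` and `C > 0` depending only on `n, λ, Λ` such that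
any nonnegative `C²` supersolution of `Σ a_{ij} ∂_{ij} v ≤ 0` in `Q₃` satisfies
`(∫_{Q₁} v^ε)^{1/ε} ≤ C inf_{Q₂} v`. -/
theorem L_epsilon_estimate
    (n : ℕ) (hn : 2 ≤ n) (lam Lam : ℝ) (hlam : 0 < lam) (hLam : lam ≤ Lam) :
    ∃ ε C : ℝ, 0 < ε ∧ 0 < C ∧
      ∀ (a : Fin n → Fin n → En n → ℝ) (v : En n → ℝ),
        UnifEllipticOn (cube n 3) lam Lam a →
        ContDiffOn ℝ 2 v (cube n 3) →
        (∀ x ∈ cube n 3, 0 ≤ v x) →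
        (∀ x ∈ cube n 3, ∑ i, ∑ j, a i j x * pd2 v i j x ≤ 0) →
        ∀ y ∈ cube n 2,
          (∫ x in cube n 1, v x ^ ε) ^ (1 / ε) ≤ C * v y := by
  obtain ⟨ε, K, C, hε, hK, hC, hest⟩ := pos_estimate n hn lam Lam hlam hLam
  refine ⟨ε, K ^ (1 / ε) * C, hε, by positivity, fun a v ha hv hv0 hsup y hy => ?_⟩
  have hy3 : y ∈ cube n 3 := fun i => by have := hy i; linarith
  have h13 : cube n 1 ⊆ ccube n := fun x hx i => by have := hx i; linarith
  have hm1 : MeasurableSet (cube n 1) := (cube_isOpen n 1).measurableSet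
  have hcont : ContinuousOn v (ccube n) := hv.continuousOn.mono (ccube_subset n)
  have hδ : ∀ δ : ℝ, 0 < δ → ∫ x in cube n 1, v x ^ ε ≤ K * (C * (v y + δ)) ^ ε := by
    intro δ hδ
    have hs : SupSol n lam Lam a (fun x => v x + δ) := by
      refine ⟨ha, hv.add contDiffOn_const, fun x hx => by linarith [hv0 x hx], fun x hx => ?_⟩
      simp only [pd2_add_const]
      exact hsup x hx
    refine le_trans ?_ (hest a _ hs y hy)
    refine setIntegral_mono_on ?_ ?_ hm1 fun x hx => ?_
    · exact ((hcont.rpow_const fun x hx => Or.inr hε.le).integrableOn_compact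
        (ccube_compact n)).mono_set h13
    · exact (((hcont.add continuousOn_const).rpow_const fun x hx => Or.inr hε.le).integrableOn_compact
        (ccube_compact n)).mono_set h13
    · exact Real.rpow_le_rpow (hv0 x (ccube_subset n (h13 hx))) (by linarith) hε.le
  have hlim : Tendsto (fun δ : ℝ => K * (C * (v y + δ)) ^ ε) (𝓝[>] 0)
      (𝓝 (K * (C * (v y + 0)) ^ ε)) := by
    refine Tendsto.mono_left ?_ nhdsWithin_le_nhds
    have : Continuous fun δ : ℝ => K * (C * (v y + δ)) ^ ε :=
      continuous_const.mul ((by fun_prop : Continuous fun δ : ℝ => C * (v y + δ)).rpow_const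
        fun _ => Or.inr hε.le)
    exact this.tendsto 0
  have hle := ge_of_tendsto hlim (eventually_nhdsWithin_of_forall fun δ h => hδ δ h)
  rw [add_zero] at hle
  have hint0 : 0 ≤ ∫ x in cube n 1, v x ^ ε :=
    setIntegral_nonneg hm1 fun x hx => Real.rpow_nonneg (hv0 x (ccube_subset n (h13 hx))) _
  have hvy := hv0 y hy3
  have hCv : 0 ≤ C * v y := by positivity
  calc (∫ x in cube n 1, v x ^ ε) ^ (1 / ε) ≤ (K * (C * v y) ^ ε) ^ (1 / ε) :=
        Real.rpow_le_rpow hint0 hle (by positivity)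
    _ = K ^ (1 / ε) * C * v y := by
        rw [Real.mul_rpow hK.le (by positivity), ← Real.rpow_mul hCv, mul_one_div_cancel hε.ne',
          Real.rpow_one, mul_assoc]
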